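/- (q-Chu–Vandermonde identity) For every rational number α and all integers n, k ≥ 0, binom(α+n, k)_q = Σ_{j=0}^{k} q^{j(n−k+j)}·binom(n, k−j)_q·binom(α, j)_q in ℚ(q). -/

import Mathlib

/-!
Everything rests on the recursion `[α+1]_q = 1 + q[α]_q`, valid for all rational `α`
(`qRat_add_one`). For `α > 1` it holds because passing from `α` to `α + 1` only increases the first
continued fraction coefficient by one, also after the expansion is made of even length
(`qCF_evenize_succ`); for `α ≤ 1` it follows because the definition of `[α]_q` through the shift
`α + N > 1` does not depend on the choice of `N` (`qRat_eq`).

Iterating the recursion gives `[α+1]_q = [k+1]_q + q^{k+1}[α-k]_q`, which is exactly the `q`-Pascal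
rule `binom(α+1,k+1)_q = binom(α,k)_q + q^{k+1} binom(α,k+1)_q` (`qBinom_pascal`). The theorem
follows by induction on `n`: the `q`-Pascal rule applied to `α + n` on the left and to `n` on the
right shows that both sides satisfy the same recursion in `n`, and for `n = 0` only the term
`j = k` survives.
-/

noncomputable section

open Finset

/-- The `q`-integer `[n]_q = 1 + q + ⋯ + q^{n-1}` as a rational function in `q`. -/
def qNum (n : ℕ) : RatFunc ℚ := ∑ i ∈ Finset.range n, RatFunc.X ^ i

/-- The `q⁻¹`-integer `[n]_{q⁻¹} = 1 + q⁻¹ + ⋯ + q^{-(n-1)}`. -/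
def qNumInv (n : ℕ) : RatFunc ℚ := ∑ i ∈ Finset.range n, (RatFunc.X)⁻¹ ^ i

/-- The continued fraction expansion of `p/q` computed by the Euclidean algorithm. -/
def cfNat (p q : ℕ) : List ℕ :=
  if h : q = 0 then [] else (p / q) :: cfNat q (p % q)
termination_by q
decreasing_by exact Nat.mod_lt _ (Nat.pos_of_ne_zero h)

/-- Turn a continued fraction expansion into one of even length,
replacing a final coefficient `aₙ` by `aₙ - 1, 1` if needed. -/
def evenize (l : List ℕ) : List ℕ :=
  if l.length % 2 = 0 then l else l.dropLast ++ [l.getLast! - 1, 1]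

/-- Evaluation of the Morier-Genoud--Ovsienko `q`-deformed continued fraction
`[a₁]_q + q^{a₁}/([a₂]_{q⁻¹} + q^{-a₂}/([a₃]_q + ⋯ + q^{a_{2m-1}}/[a_{2m}]_{q⁻¹}))`.
The boolean records whether the current position is odd (`true`) or even (`false`).
(The empty continued fraction is sent to `0`; since division by zero yields `0`
in `RatFunc ℚ`, a final term `[a]_{q⁻¹} + q^{-a}/0⁻ = [a]_{q⁻¹}` comes out correctly.) -/
def qCF : Bool → List ℕ → RatFunc ℚ
  | _, [] => 0
  | true, a :: l => qNum a + RatFunc.X ^ a / qCF false l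
  | false, a :: l => qNumInv a + (RatFunc.X)⁻¹ ^ a / qCF true l

/-- The Morier-Genoud--Ovsienko `q`-rational of `α > 1`, via the even-length
continued fraction expansion of `α`. -/
def qRatCF (α : ℚ) : RatFunc ℚ := qCF true (evenize (cfNat α.num.toNat α.den))

/-- The Morier-Genoud--Ovsienko `q`-rational `[α]_q ∈ ℚ(q)`, for all `α ∈ ℚ`:
for `α > 1` it is given by the `q`-deformed continued fraction, and it is
extended to all of `ℚ` by the rule `[α-1]_q = ([α]_q - 1)/q`. -/
def qRat (α : ℚ) : RatFunc ℚ :=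
  if 1 < α then qRatCF α
  else (qRatCF (α + (2 - ⌊α⌋).toNat) - qNum (2 - ⌊α⌋).toNat) / RatFunc.X ^ (2 - ⌊α⌋).toNat

/-- `{α}_q := [α+1]_q - [α]_q`, the substitute for `q^α`. -/
def qPow (α : ℚ) : RatFunc ℚ := qRat (α + 1) - qRat α

/-- The `q`-factorial `[k]_q!`. -/
def qFact (k : ℕ) : RatFunc ℚ := ∏ i ∈ Finset.range k, qNum (i + 1)

/-- The `q`-binomial coefficient `binom(α,k)_q = [α]_q [α-1]_q ⋯ [α-k+1]_q / [k]_q!`. -/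
def qBinom (α : ℚ) (k : ℕ) : RatFunc ℚ :=
  (∏ i ∈ Finset.range k, qRat (α - i)) / qFact k

/-- The Laurent-series expansion (at `q = 0`) of a rational function. -/
def lau (f : RatFunc ℚ) : LaurentSeries ℚ := ↑f


theorem qNum_succ (n : ℕ) : qNum (n + 1) = 1 + RatFunc.X * qNum n := by
  simp only [qNum, Finset.sum_range_succ', pow_succ', Finset.mul_sum, pow_zero]
  ring

theorem qNum_succ' (n : ℕ) : qNum (n + 1) = qNum n + RatFunc.X ^ n := by
  simp only [qNum, Finset.sum_range_succ]

theorem qNum_succ_ne_zero (n : ℕ) : qNum (n + 1) ≠ 0 := by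
  have h : qNum (n + 1) = algebraMap (Polynomial ℚ) (RatFunc ℚ)
      (∑ i ∈ Finset.range (n + 1), Polynomial.X ^ i) := by
    simp [qNum]
  rw [h]
  intro h0
  have h1 := congrArg (Polynomial.eval 1) ((map_eq_zero_iff _ (RatFunc.algebraMap_injective ℚ)).1 h0)
  simp only [Polynomial.eval_finsetSum, Polynomial.eval_pow, Polynomial.eval_X, one_pow,
    Polynomial.eval_zero, Finset.sum_const, Finset.card_range, nsmul_eq_mul, mul_one] at h1
  exact Nat.cast_ne_zero.2 n.succ_ne_zero h1

theorem qCF_cons_succ (a : ℕ) (l : List ℕ) :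
    qCF true ((a + 1) :: l) = 1 + RatFunc.X * qCF true (a :: l) := by
  simp only [qCF, qNum_succ, pow_succ']
  ring

/-- Increasing the first coefficient is compatible with `evenize`. The hypothesis `1 ≤ a` matters
only for a one-term expansion, where `evenize` produces `[a - 1, 1]` with truncated subtraction. -/
theorem qCF_evenize_succ (a : ℕ) (ha : 1 ≤ a) (l : List ℕ) :
    qCF true (evenize ((a + 1) :: l)) = 1 + RatFunc.X * qCF true (evenize (a :: l)) := by
  cases l with
  | nil =>
    obtain ⟨b, rfl⟩ : ∃ b, a = b + 1 := ⟨a - 1, by omega⟩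
    simpa [evenize] using qCF_cons_succ b [1]
  | cons b l =>
    by_cases h : (a :: b :: l).length % 2 = 0
    · have h' : ((a + 1) :: b :: l).length % 2 = 0 := h
      rw [evenize, evenize, if_pos h, if_pos h', qCF_cons_succ]
    · have h' : ¬ ((a + 1) :: b :: l).length % 2 = 0 := h
      rw [evenize, evenize, if_neg h, if_neg h']
      have e : ∀ c : ℕ, (c :: b :: l).getLast! = (b :: l).getLast! := fun c => by
        simp [List.getLast?_cons_cons]
      rw [e, e, List.dropLast_cons_cons, List.dropLast_cons_cons]
      exact qCF_cons_succ _ _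

theorem qRatCF_add_one (α : ℚ) (hα : 1 < α) :
    qRatCF (α + 1) = 1 + RatFunc.X * qRatCF α := by
  have hden : (α + 1).den = α.den := by simp
  have hpos : 0 < α.num := Rat.num_pos.2 (by linarith)
  have hd : (0 : ℚ) < α.den := by exact_mod_cast α.den_pos
  have hnum : (α + 1).num = α.num + α.den := by
    have h1 := Rat.mul_den_eq_num (α + 1)
    rw [hden] at h1
    have h2 := Rat.mul_den_eq_num α
    have h3 : ((α + 1).num : ℚ) = α.num + α.den := by linear_combination -h1 + h2
    exact_mod_cast h3
  have hlt : (α.den : ℤ) < α.num := by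
    have h2 := Rat.mul_den_eq_num α
    have : (α.den : ℚ) < α.num := by nlinarith
    exact_mod_cast this
  have hto : (α + 1).num.toNat = α.num.toNat + α.den := by omega
  have hq : 1 ≤ α.num.toNat / α.den := (Nat.one_le_div_iff α.den_pos).2 (by omega)
  have c1 : cfNat α.num.toNat α.den =
      (α.num.toNat / α.den) :: cfNat α.den (α.num.toNat % α.den) := by
    rw [cfNat, dif_neg α.den_ne_zero]
  have c2 : cfNat (α.num.toNat + α.den) α.den =
      (α.num.toNat / α.den + 1) :: cfNat α.den (α.num.toNat % α.den) := by
    rw [cfNat, dif_neg α.den_ne_zero, Nat.add_div_right _ α.den_pos, Nat.add_mod_right]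
  rw [qRatCF, qRatCF, hden, hto, c1, c2]
  exact qCF_evenize_succ _ hq _

theorem qRatCF_add_nat (α : ℚ) (hα : 1 < α) (m : ℕ) :
    qRatCF (α + m) = qNum m + RatFunc.X ^ m * qRatCF α := by
  induction m with
  | zero => simp [qNum]
  | succ m ih =>
    have h : α + ((m + 1 : ℕ) : ℚ) = (α + m) + 1 := by push_cast; ring
    have hm : (0 : ℚ) ≤ m := m.cast_nonneg
    rw [h, qRatCF_add_one _ (by linarith), ih, qNum_succ]
    ring

/-- Two shifts of `α` beyond `1` yield the same value of `[α]_q`. -/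
theorem shift_indep (α : ℚ) (M N : ℕ) (hMN : M ≤ N) (hM : 1 < α + M) :
    (qRatCF (α + M) - qNum M) / RatFunc.X ^ M = (qRatCF (α + N) - qNum N) / RatFunc.X ^ N := by
  have hX : (RatFunc.X : RatFunc ℚ) ≠ 0 := RatFunc.X_ne_zero
  obtain ⟨d, rfl⟩ := Nat.exists_eq_add_of_le hMN
  induction d with
  | zero => rfl
  | succ d ih =>
    have h : α + ((M + (d + 1) : ℕ) : ℚ) = (α + (M + d : ℕ)) + 1 := by push_cast; ring
    have hd : (0 : ℚ) ≤ d := d.cast_nonneg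
    rw [ih (by omega), h, qRatCF_add_one _ (by push_cast; linarith), ← add_assoc, qNum_succ,
      div_eq_div_iff (pow_ne_zero _ hX) (pow_ne_zero _ hX)]
    ring

/-- `[α]_q` may be computed from any shift `α + N > 1`. -/
theorem qRat_eq (α : ℚ) (N : ℕ) (hN : 1 < α + N) :
    qRat α = (qRatCF (α + N) - qNum N) / RatFunc.X ^ N := by
  rw [qRat]
  split_ifs with h
  · have := shift_indep α 0 N (Nat.zero_le _) (by simpa using h)
    simpa [qNum] using this
  · have hM : 1 < α + ((2 - ⌊α⌋).toNat : ℚ) := by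
      have h1 : (2 - ⌊α⌋ : ℤ) ≤ ((2 - ⌊α⌋).toNat : ℤ) := Int.self_le_toNat _
      have h2 : (2 - ⌊α⌋ : ℚ) ≤ ((2 - ⌊α⌋).toNat : ℚ) := by exact_mod_cast h1
      have h3 := Int.floor_le α
      linarith
    rcases le_total (2 - ⌊α⌋).toNat N with hle | hle
    · exact shift_indep α _ _ hle hM
    · exact (shift_indep α _ _ hle hN).symm

/-- The recursion `[α+1]_q = 1 + q[α]_q` for all rational `α`. -/
theorem qRat_add_one (α : ℚ) : qRat (α + 1) = 1 + RatFunc.X * qRat α := by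
  have hX : (RatFunc.X : RatFunc ℚ) ≠ 0 := RatFunc.X_ne_zero
  obtain ⟨N, hN⟩ := exists_nat_gt (1 - α)
  have h : α + 1 + (N : ℚ) = (α + N) + 1 := by ring
  rw [qRat_eq (α + 1) N (by linarith), qRat_eq α N (by linarith), h,
    qRatCF_add_one _ (by linarith)]
  have e : qNum N + RatFunc.X ^ N = 1 + RatFunc.X * qNum N := by rw [← qNum_succ', qNum_succ]
  field_simp
  linear_combination -e

theorem qRat_add_nat (α : ℚ) (m : ℕ) : qRat (α + m) = qNum m + RatFunc.X ^ m * qRat α := by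
  induction m with
  | zero => simp [qNum]
  | succ m ih =>
    have h : α + ((m + 1 : ℕ) : ℚ) = (α + m) + 1 := by push_cast; ring
    rw [h, qRat_add_one, ih, qNum_succ]
    ring

theorem qRat_zero : qRat 0 = 0 := by
  have h2 : qRatCF 2 = qNum 2 := by
    have c : cfNat 2 1 = [2] := by simp [cfNat]
    simp [qRatCF, c, evenize, qCF, qNum, Finset.sum_range_succ, qNumInv]
  rw [qRat_eq 0 2 (by norm_num)]
  simp [h2]

theorem qBinom_zero_right (α : ℚ) : qBinom α 0 = 1 := by
  simp [qBinom, qFact]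

theorem qBinom_zero_succ (k : ℕ) : qBinom 0 (k + 1) = 0 := by
  simp [qBinom, Finset.prod_range_succ', qRat_zero]

/-- The `q`-Pascal rule for an arbitrary rational top argument. -/
theorem qBinom_pascal (α : ℚ) (k : ℕ) :
    qBinom (α + 1) (k + 1) = qBinom α k + RatFunc.X ^ (k + 1) * qBinom α (k + 1) := by
  have hF : qFact k ≠ 0 := Finset.prod_ne_zero_iff.2 fun i _ => qNum_succ_ne_zero i
  have hk := qNum_succ_ne_zero k
  have hF' : qFact (k + 1) = qFact k * qNum (k + 1) := by simp [qFact, Finset.prod_range_succ]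
  have hL : ∏ i ∈ Finset.range (k + 1), qRat (α + 1 - i) =
      (∏ i ∈ Finset.range k, qRat (α - i)) * qRat (α + 1) := by
    rw [Finset.prod_range_succ']
    congr 1
    · refine Finset.prod_congr rfl fun i _ => ?_
      congr 1
      push_cast
      ring
    · simp
  have hα : qRat (α + 1) = qNum (k + 1) + RatFunc.X ^ (k + 1) * qRat (α - k) := by
    rw [← qRat_add_nat]
    congr 1
    push_cast
    ring
  rw [qBinom, qBinom, qBinom, hL, Finset.prod_range_succ, hF', hα]
  field_simp

/-- The `q`-Chu--Vandermonde identity: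
`binom(α+n,k)_q = Σ_{j=0}^{k} q^{j(n-k+j)}·binom(n,k-j)_q·binom(α,j)_q`. -/
theorem qBinom_chu_vandermonde (α : ℚ) (n k : ℕ) :
    qBinom (α + n) k = ∑ j ∈ Finset.range (k + 1),
      RatFunc.X ^ ((j : ℤ) * ((n : ℤ) - k + j)) * qBinom n (k - j) * qBinom α j := by
  have hX : (RatFunc.X : RatFunc ℚ) ≠ 0 := RatFunc.X_ne_zero
  induction n generalizing k with
  | zero =>
    rw [Finset.sum_range_succ, Finset.sum_eq_zero]
    · simp [qBinom_zero_right]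
    · intro j hj
      have hj' : k - j = (k - j - 1) + 1 := by
        have := Finset.mem_range.1 hj
        omega
      rw [hj', Nat.cast_zero, Nat.cast_zero, qBinom_zero_succ]
      simp
  | succ n ih =>
    cases k with
    | zero => simp [qBinom_zero_right]
    | succ k =>
      have h : α + ((n + 1 : ℕ) : ℚ) = (α + n) + 1 := by push_cast; ring
      rw [h, qBinom_pascal, ih k, ih (k + 1), Finset.sum_range_succ _ (k + 1),
        Finset.sum_range_succ _ (k + 1), mul_add, ← add_assoc, Finset.mul_sum,
        ← Finset.sum_add_distrib]
      congr 1
      · refine Finset.sum_congr rfl fun j hj => ?_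
        have hjk : j ≤ k := Nat.lt_succ_iff.1 (Finset.mem_range.1 hj)
        have e : k + 1 - j = (k - j) + 1 := by omega
        -- `q^{k-j+1}` is the Pascal factor of `binom(n+1, k+1-j)`; it turns the new exponent of
        -- `q` into `k + 1` plus the old one.
        have e1 : (RatFunc.X : RatFunc ℚ) ^ ((j : ℤ) * (((n + 1 : ℕ) : ℤ) - (k + 1 : ℕ) + j)) =
            RatFunc.X ^ ((j : ℤ) * ((n : ℤ) - k + j)) := by
          congr 1
          push_cast
          ring
        have e2 : (RatFunc.X : RatFunc ℚ) ^ (k + 1) *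
              RatFunc.X ^ ((j : ℤ) * ((n : ℤ) - (k + 1 : ℕ) + j)) =
            RatFunc.X ^ ((j : ℤ) * ((n : ℤ) - k + j)) * RatFunc.X ^ (k - j + 1) := by
          rw [← zpow_natCast, ← zpow_natCast, ← zpow_add₀ hX, ← zpow_add₀ hX]
          congr 1
          push_cast [Nat.cast_sub hjk]
          ring
        rw [e, e1, Nat.cast_succ n, qBinom_pascal]
        linear_combination (qBinom n (k - j + 1) * qBinom α j) * e2
      · have e3 : (RatFunc.X : RatFunc ℚ) ^ (k + 1) * RatFunc.X ^
              (((k + 1 : ℕ) : ℤ) * ((n : ℤ) - (k + 1 : ℕ) + (k + 1 : ℕ))) =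
            RatFunc.X ^ (((k + 1 : ℕ) : ℤ) *
              (((n + 1 : ℕ) : ℤ) - (k + 1 : ℕ) + (k + 1 : ℕ))) := by
          rw [← zpow_natCast, ← zpow_add₀ hX]
          congr 1
          push_cast
          ring
        rw [Nat.sub_self, qBinom_zero_right, qBinom_zero_right, ← e3]
        ring

end
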